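/- Let Z = X + sqrt(theta)·g·u^T where X ~ N(0, I_n)^{⊗d} (columns i.i.d. standard Gaussian in R^n), g ~ N(0, I_n) independent of X, u ∈ R^d a fixed unit vector, and theta > 0. Then d_TV(Law(X + sqrt(theta)·g·u^T), Law(X + sqrt(theta)·(sqrt(n)/||g||)·g·u^T)) = O(sqrt(theta)), with implicit constant universal. -/

import Mathlib

open MeasureTheory ProbabilityTheory

noncomputable def tvDist {α : Type*} [MeasurableSpace α] (P Q : Measure α) : ℝ :=
  ⨆ s : {s : Set α // MeasurableSet s}, |(P s).toReal - (Q s).toReal|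

noncomputable def stdGaussian (n : ℕ) : Measure (Fin n → ℝ) :=
  Measure.pi fun _ => gaussianReal 0 1

noncomputable def euclNorm {n : ℕ} (x : Fin n → ℝ) : ℝ := Real.sqrt (∑ i, x i ^ 2)

/-- `f` is a square-integrable density of `ν` with respect to `μ`, with second moment `exp c`. -/
structure IsL2Density {α : Type*} [MeasurableSpace α] (μ ν : Measure α) (f : α → ℝ) (c : ℝ) :
    Prop where
  measurable : Measurable f
  nonneg : ∀ x, 0 ≤ f x
  eq_withDensity : ν = μ.withDensity fun x => ENNReal.ofReal (f x)
  integrable : Integrable f μ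
  integrable_sq : Integrable (fun x => f x ^ 2) μ
  integral_sq : ∫ x, f x ^ 2 ∂μ = Real.exp c

lemma IsL2Density.pi {ι : Type*} [Fintype ι] {E : ι → Type*} [∀ i, MeasurableSpace (E i)]
    {μ ν : ∀ i, Measure (E i)} [∀ i, IsProbabilityMeasure (μ i)]
    [∀ i, IsProbabilityMeasure (ν i)] {f : ∀ i, E i → ℝ} {c : ι → ℝ}
    (h : ∀ i, IsL2Density (μ i) (ν i) (f i) (c i)) :
    IsL2Density (Measure.pi μ) (Measure.pi ν) (fun x => ∏ i, f i (x i)) (∑ i, c i) where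
  measurable := Finset.measurable_prod _ fun i _ =>
    (h i).measurable.comp (measurable_pi_apply i)
  nonneg x := Finset.prod_nonneg fun i _ => (h i).nonneg _
  eq_withDensity := by
    refine Measure.pi_eq fun s hs => ?_
    rw [withDensity_apply _ (MeasurableSet.univ_pi hs), Measure.restrict_pi_pi,
      ← ofReal_integral_eq_lintegral_ofReal, integral_fintype_prod_eq_prod,
      ENNReal.ofReal_prod_of_nonneg]
    · refine Finset.prod_congr rfl fun i _ => ?_
      rw [(h i).eq_withDensity, withDensity_apply _ (hs i), ofReal_integral_eq_lintegral_ofReal]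
      · exact (h i).integrable.restrict
      · exact ae_of_all _ (h i).nonneg
    · exact fun i _ => integral_nonneg (h i).nonneg
    · exact Integrable.fintype_prod_dep fun i => (h i).integrable.restrict
    · exact ae_of_all _ fun x => Finset.prod_nonneg fun i _ => (h i).nonneg _
  integrable := Integrable.fintype_prod_dep fun i => (h i).integrable
  integrable_sq := by
    simp_rw [← Finset.prod_pow]
    exact Integrable.fintype_prod_dep fun i => (h i).integrable_sq
  integral_sq := by
    simp_rw [← Finset.prod_pow]
    rw [integral_fintype_prod_eq_prod (f := fun i x => f i x ^ 2), Real.exp_sum]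
    exact Finset.prod_congr rfl fun i _ => (h i).integral_sq

lemma isL2Density_gaussianReal (a b : ℝ) :
    IsL2Density (gaussianReal b 1) (gaussianReal a 1)
      (fun x => Real.exp ((b ^ 2 - a ^ 2) / 2) * Real.exp ((a - b) * x)) ((a - b) ^ 2) where
  measurable := by fun_prop
  nonneg x := by positivity
  eq_withDensity := by
    rw [gaussianReal_of_var_ne_zero _ one_ne_zero, gaussianReal_of_var_ne_zero _ one_ne_zero,
      ← withDensity_mul _ (measurable_gaussianPDF _ _) (by fun_prop)]
    congr 1
    ext x
    simp only [Pi.mul_apply, gaussianPDF]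
    rw [← ENNReal.ofReal_mul (gaussianPDFReal_nonneg _ _ _)]
    congr 1
    simp only [gaussianPDFReal]
    rw [← Real.exp_add, mul_assoc _ (Real.exp _), ← Real.exp_add]
    congr 2
    push_cast
    ring
  integrable := (integrable_exp_mul_gaussianReal _).const_mul _
  integrable_sq := by
    simp_rw [mul_pow, ← Real.exp_nat_mul, ← mul_assoc]
    exact (integrable_exp_mul_gaussianReal _).const_mul _
  integral_sq := by
    have h := congrFun (mgf_fun_id_gaussianReal (μ := b) (v := 1)) (2 * (a - b))
    simp only [mgf] at h
    simp_rw [mul_pow, ← Real.exp_nat_mul, ← mul_assoc]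
    rw [integral_const_mul]
    push_cast
    rw [h, ← Real.exp_add]
    congr 1
    push_cast
    ring

lemma integral_abs_le_sqrt_integral_sq {α : Type*} [MeasurableSpace α] {μ : Measure α}
    [IsProbabilityMeasure μ] {f : α → ℝ} (hf : MemLp f 2 μ) :
    ∫ x, |f x| ∂μ ≤ Real.sqrt (∫ x, f x ^ 2 ∂μ) := by
  refine Real.le_sqrt_of_sq_le ?_
  have h := variance_nonneg (fun x => |f x|) μ
  rw [variance_eq_sub (X := fun x => |f x|) hf.abs] at h
  simpa using h

lemma IsL2Density.abs_sub_le {α : Type*} [MeasurableSpace α] {μ ν : Measure α}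
    [IsProbabilityMeasure μ] [IsProbabilityMeasure ν] {f : α → ℝ} {c : ℝ}
    (h : IsL2Density μ ν f c) {s : Set α} (hs : MeasurableSet s) :
    |ν.real s - μ.real s| ≤ Real.sqrt (Real.exp c - 1) := by
  have hν : ∀ t, MeasurableSet t → ν.real t = ∫ x in t, f x ∂μ := fun t ht => by
    rw [Measure.real, h.eq_withDensity, withDensity_apply _ ht,
      integral_eq_lintegral_of_nonneg_ae (ae_of_all _ h.nonneg)
        h.measurable.aestronglyMeasurable]
  have hone : ∫ x, f x ∂μ = 1 := by
    have := hν Set.univ MeasurableSet.univ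
    simpa using this.symm
  have hL2 : MemLp (fun x => f x - 1) 2 μ :=
    ((memLp_two_iff_integrable_sq h.measurable.aestronglyMeasurable).2 h.integrable_sq).sub
      (memLp_const 1)
  have hint : Integrable (fun x => f x - 1) μ := h.integrable.sub (integrable_const 1)
  have hsq : ∫ x, (f x - 1) ^ 2 ∂μ = Real.exp c - 1 := by
    have e : ∀ x, (f x - 1) ^ 2 = f x ^ 2 - 2 * f x + 1 := fun x => by ring
    have hi : Integrable (fun x => f x ^ 2 - 2 * f x) μ :=
      h.integrable_sq.sub (h.integrable.const_mul 2)
    simp_rw [e]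
    rw [integral_add hi (integrable_const 1), integral_sub h.integrable_sq (h.integrable.const_mul 2), integral_const_mul, hone,
      h.integral_sq]
    simp
    ring
  calc |ν.real s - μ.real s| = |∫ x in s, (f x - 1) ∂μ| := by
        rw [integral_sub h.integrable.restrict (integrable_const 1), hν s hs]
        simp
    _ ≤ ∫ x in s, |f x - 1| ∂μ := abs_integral_le_integral_abs
    _ ≤ ∫ x, |f x - 1| ∂μ :=
        setIntegral_le_integral hint.abs (ae_of_all _ fun x => abs_nonneg _)
    _ ≤ Real.sqrt (∫ x, (f x - 1) ^ 2 ∂μ) := integral_abs_le_sqrt_integral_sq hL2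
    _ = _ := by rw [hsq]

lemma sqrt_exp_sq_sub_one_le {t : ℝ} (ht : 0 ≤ t) (ht1 : t ≤ 1) :
    Real.sqrt (Real.exp (t ^ 2) - 1) ≤ 2 * t := by
  refine Real.sqrt_le_iff.2 ⟨by positivity, ?_⟩
  have h2 : t ^ 2 ≤ 1 := by nlinarith
  have := Real.abs_exp_sub_one_le (x := t ^ 2) (by rwa [abs_of_nonneg (sq_nonneg t)])
  rw [abs_of_nonneg (sq_nonneg t)] at this
  nlinarith [le_abs_self (Real.exp (t ^ 2) - 1), sq_nonneg t]

instance isProbabilityMeasure_stdGaussian (n : ℕ) : IsProbabilityMeasure (stdGaussian n) := by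
  unfold _root_.stdGaussian
  infer_instance

lemma map_add_pi_stdGaussian {d n : ℕ} (a : Fin d → Fin n → ℝ) :
    (Measure.pi fun _ : Fin d => stdGaussian n).map (fun x i j => x i j + a i j) =
      Measure.pi fun i => Measure.pi fun j => gaussianReal (a i j) 1 := by
  have h : ∀ i, (stdGaussian n).map (fun x j => x j + a i j) =
      Measure.pi fun j => gaussianReal (a i j) 1 := fun i => by
    unfold _root_.stdGaussian
    rw [Measure.pi_map_pi (f := fun j y => y + a i j) (fun j => by fun_prop)]
    simp [gaussianReal_map_add_const]
  have : ∀ i, SigmaFinite ((stdGaussian n).map (fun x j => x j + a i j)) := fun i => by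
    rw [h i]; infer_instance
  rw [Measure.pi_map_pi (μ := fun _ : Fin d => stdGaussian n)
    (f := fun i x j => x j + a i j)
    (fun i => Measurable.aemeasurable (by fun_prop))]
  simp_rw [h]

/-- Two shifts of a Gaussian matrix differ in total variation by at most a constant times the
Frobenius distance of the shifts. -/
lemma abs_map_add_sub_map_add_le {d n : ℕ} (a b : Fin d → Fin n → ℝ) {t : ℝ} (ht : 0 ≤ t)
    (hab : ∑ i, ∑ j, (a i j - b i j) ^ 2 = t ^ 2) {s : Set (Fin d → Fin n → ℝ)}
    (hs : MeasurableSet s) :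
    |((Measure.pi fun _ : Fin d => stdGaussian n).map (fun x i j => x i j + a i j)).real s -
      ((Measure.pi fun _ : Fin d => stdGaussian n).map (fun x i j => x i j + b i j)).real s| ≤
      2 * t := by
  rw [map_add_pi_stdGaussian, map_add_pi_stdGaussian]
  rcases le_total t 1 with h1 | h1
  · refine (IsL2Density.abs_sub_le (IsL2Density.pi fun i => IsL2Density.pi fun j =>
      isL2Density_gaussianReal (a i j) (b i j)) hs).trans ?_
    rw [hab]
    exact sqrt_exp_sq_sub_one_le ht h1
  · refine (abs_sub_le_of_nonneg_of_le measureReal_nonneg measureReal_le_one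
      measureReal_nonneg measureReal_le_one).trans ?_
    linarith

lemma integral_abs_sum_sq_sub_le (n : ℕ) :
    Integrable (fun g : Fin n → ℝ => |∑ j, (g j ^ 2 - 1)|) (stdGaussian n) ∧
    ∫ g, |∑ j, (g j ^ 2 - 1)| ∂(stdGaussian n) ≤
      Real.sqrt (n * Var[fun x => x ^ 2 - 1; gaussianReal 0 1]) := by
  have hX : MemLp (fun x : ℝ => x ^ 2 - 1) 2 (gaussianReal 0 1) := by
    refine MemLp.sub ?_ (memLp_const 1)
    have h4 : MemLp (fun x : ℝ => x) 4 (gaussianReal 0 1) := memLp_id_gaussianReal 4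
    have : ENNReal.HolderTriple 4 4 2 := ⟨by
      rw [show (4 : ENNReal) = 2 * 2 by norm_num, ENNReal.mul_inv (by simp) (by simp),
        ← two_mul, ← mul_assoc, ENNReal.mul_inv_cancel (by simp) (by simp), one_mul]⟩
    simp_rw [sq]
    exact h4.mul h4 (r := 2)
  have h0 : ∫ x : ℝ, (x ^ 2 - 1) ∂(gaussianReal 0 1) = 0 := by
    have h2 : MemLp (fun x : ℝ => x) 2 (gaussianReal 0 1) := memLp_id_gaussianReal 2
    have hv := variance_fun_id_gaussianReal (μ := 0) (v := 1)
    rw [variance_eq_sub h2] at hv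
    rw [integral_sub h2.integrable_sq (integrable_const 1)]
    simp at hv ⊢
    rw [hv]; simp
  have hXi : ∀ i : Fin n, MemLp (fun g : Fin n → ℝ => g i ^ 2 - 1) 2 (stdGaussian n) :=
    fun i => hX.comp_measurePreserving (measurePreserving_eval (fun _ => gaussianReal 0 1) i)
  have hS : MemLp (fun g : Fin n → ℝ => ∑ j, (g j ^ 2 - 1)) 2 (stdGaussian n) :=
    memLp_finsetSum _ fun i _ => hXi i
  have hmean : ∫ g, ∑ j, (g j ^ 2 - 1) ∂(stdGaussian n) = 0 := by
    rw [integral_finsetSum _ fun i _ => (hXi i).integrable one_le_two]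
    refine Finset.sum_eq_zero fun i _ => ?_
    exact (integral_comp_eval (μ := fun _ : Fin n => gaussianReal 0 1) (i := i)
      (f := fun x : ℝ => x ^ 2 - 1) hX.aestronglyMeasurable).trans h0
  refine ⟨(hS.integrable one_le_two).abs, (integral_abs_le_sqrt_integral_sq hS).trans ?_⟩
  refine Real.sqrt_le_sqrt (le_of_eq ?_)
  have hvar := variance_sum_pi (μ := fun _ : Fin n => gaussianReal 0 1)
    (X := fun _ x => x ^ 2 - 1) fun _ => hX
  have hsub := variance_eq_sub hS
  rw [hmean] at hsub
  simp only [Finset.sum_const, Finset.card_univ, Fintype.card_fin, nsmul_eq_mul] at hvar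
  rw [← hvar]
  have e : (∑ i : Fin n, fun g : Fin n → ℝ => g i ^ 2 - 1) =
      fun g => ∑ i, (g i ^ 2 - 1) := by
    ext g; simp
  rw [e]
  simpa [_root_.stdGaussian] using hsub.symm

lemma euclNorm_nonneg {n : ℕ} (x : Fin n → ℝ) : 0 ≤ euclNorm x := Real.sqrt_nonneg _

lemma euclNorm_sq {n : ℕ} (x : Fin n → ℝ) : euclNorm x ^ 2 = ∑ i, x i ^ 2 :=
  Real.sq_sqrt (Finset.sum_nonneg fun _ _ => sq_nonneg _)

lemma measurable_euclNorm {n : ℕ} : Measurable (euclNorm : (Fin n → ℝ) → ℝ) := by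
  unfold euclNorm
  fun_prop

/-- Rescaling `g` to length `√n` moves it by at most `|‖g‖² - n| / √n`. -/
lemma abs_one_sub_div_mul_euclNorm_le {n : ℕ} (g : Fin n → ℝ) :
    |1 - Real.sqrt n / euclNorm g| * euclNorm g ≤ |∑ j, (g j ^ 2 - 1)| / Real.sqrt n := by
  rcases (euclNorm_nonneg g).eq_or_lt with h | h
  · rw [← h, mul_zero]
    positivity
  · have hn : 0 < Real.sqrt n := by
      rcases Nat.eq_zero_or_pos n with rfl | hn
      · simp [euclNorm] at h
      · positivity
    have hsum : ∑ j, (g j ^ 2 - 1) =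
        (euclNorm g - Real.sqrt n) * (euclNorm g + Real.sqrt n) := by
      have h1 := euclNorm_sq g
      have h2 := Real.sq_sqrt (Nat.cast_nonneg (α := ℝ) n)
      simp only [Finset.sum_sub_distrib, Finset.sum_const, Finset.card_univ, Fintype.card_fin,
        nsmul_eq_mul, mul_one]
      linear_combination -h1 + h2
    have e : |1 - Real.sqrt n / euclNorm g| * euclNorm g = |euclNorm g - Real.sqrt n| := by
      rw [← abs_of_pos h, ← abs_mul, abs_of_pos h]
      congr 1
      field_simp
    rw [e, hsum, abs_mul, abs_of_pos (add_pos h hn), le_div_iff₀ hn]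
    exact mul_le_mul_of_nonneg_left (by linarith) (abs_nonneg _)

/-- Convexity of the discrepancy of shifted measures under mixing over the shift. -/
lemma abs_map_prod_sub_map_prod_le {α β γ : Type*} [MeasurableSpace α] [MeasurableSpace β]
    [MeasurableSpace γ] (μ : Measure α) (σ : Measure β) [IsProbabilityMeasure μ]
    [IsProbabilityMeasure σ] {F G : α × β → γ} (hF : Measurable F) (hG : Measurable G)
    {s : Set γ} (hs : MeasurableSet s) {k : β → ℝ} (hk : Integrable k σ)
    (h : ∀ y, |(μ.map fun x => F (x, y)).real s - (μ.map fun x => G (x, y)).real s| ≤ k y) :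
    |((μ.prod σ).map F).real s - ((μ.prod σ).map G).real s| ≤ ∫ y, k y ∂σ := by
  have key : ∀ H : α × β → γ, Measurable H →
      Integrable (fun y => (μ.map fun x => H (x, y)).real s) σ ∧
      ((μ.prod σ).map H).real s = ∫ y, (μ.map fun x => H (x, y)).real s ∂σ := by
    intro H hH
    have e : ∀ y, (μ.map fun x => H (x, y)) s = μ ((fun x => (x, y)) ⁻¹' (H ⁻¹' s)) :=
      fun y => Measure.map_apply (by fun_prop) hs
    have hm : Measurable fun y => (μ.map fun x => H (x, y)) s := by
      simp_rw [e]
      exact measurable_measure_prodMk_right (hH hs)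
    have hp : ∀ y, IsProbabilityMeasure (μ.map fun x => H (x, y)) := fun y =>
      Measure.isProbabilityMeasure_map (by fun_prop)
    constructor
    · refine Integrable.of_bound hm.ennreal_toReal.aestronglyMeasurable 1 (ae_of_all _ fun y => ?_)
      rw [Real.norm_of_nonneg measureReal_nonneg]
      exact measureReal_le_one
    · simp only [Measure.real]
      rw [integral_toReal hm.aemeasurable (ae_of_all _ fun y => measure_lt_top _ _),
        Measure.map_apply hH hs, Measure.prod_apply_symm (hH hs)]
      simp_rw [e]
  obtain ⟨iF, eF⟩ := key F hF
  obtain ⟨iG, eG⟩ := key G hG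
  rw [eF, eG, ← integral_sub iF iG]
  exact abs_integral_le_integral_abs.trans (integral_mono (iF.sub iG).abs hk h)

/-- Normalizing the spike length in the Spiked Covariance Model: for
`Z = X + √θ g uᵀ` with `X ~ N(0, I_n)^{⊗d}`, `g ~ N(0, I_n)` independent of `X` and `u` a unit
vector, `d_TV(X + √θ g uᵀ, X + √θ (√n/‖g‖) g uᵀ) = O(√θ)` with a universal implicit constant. -/
theorem tv_spike_normalization :
    ∃ C : ℝ, 0 < C ∧ ∀ (n d : ℕ) (θ : ℝ), 0 < θ → ∀ u : Fin d → ℝ, euclNorm u = 1 →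
      tvDist
          (Measure.map
            (fun p : (Fin d → Fin n → ℝ) × (Fin n → ℝ) =>
              fun i j => p.1 i j + Real.sqrt θ * u i * p.2 j)
            ((Measure.pi fun _ : Fin d => stdGaussian n).prod (stdGaussian n)))
          (Measure.map
            (fun p : (Fin d → Fin n → ℝ) × (Fin n → ℝ) =>
              fun i j => p.1 i j + Real.sqrt θ * (Real.sqrt n / euclNorm p.2) * u i * p.2 j)
            ((Measure.pi fun _ : Fin d => stdGaussian n).prod (stdGaussian n))) ≤
        C * Real.sqrt θ := by
  set V : ℝ := Var[fun x => x ^ 2 - 1; gaussianReal 0 1]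
  have hV : 0 ≤ V := variance_nonneg _ _
  refine ⟨2 * Real.sqrt V + 1, by positivity, fun n d θ hθ u hu => ?_⟩
  obtain ⟨hint, hle⟩ := integral_abs_sum_sq_sub_le n
  have : Nonempty {s : Set (Fin d → Fin n → ℝ) // MeasurableSet s} := ⟨⟨∅, .empty⟩⟩
  refine ciSup_le fun ⟨s, hs⟩ => ?_
  have hF : Measurable fun p : (Fin d → Fin n → ℝ) × (Fin n → ℝ) =>
      fun i j => p.1 i j + Real.sqrt θ * u i * p.2 j := by fun_prop
  have hG : Measurable fun p : (Fin d → Fin n → ℝ) × (Fin n → ℝ) =>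
      fun i j => p.1 i j + Real.sqrt θ * (Real.sqrt n / euclNorm p.2) * u i * p.2 j := by
    have hmeas := measurable_euclNorm (n := n)
    fun_prop
  refine (abs_map_prod_sub_map_prod_le
    (k := fun g => 2 * Real.sqrt θ / Real.sqrt n * |∑ j, (g j ^ 2 - 1)|) _ _
    hF hG hs (hint.const_mul _) fun g => ?_).trans ?_
  · refine (abs_map_add_sub_map_add_le
      (t := Real.sqrt θ * (|1 - Real.sqrt n / euclNorm g| * euclNorm g))
      (fun i j => Real.sqrt θ * u i * g j)
      (fun i j => Real.sqrt θ * (Real.sqrt n / euclNorm g) * u i * g j)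
      (by have := euclNorm_nonneg g; positivity) ?_ hs).trans ?_
    · have e : ∀ i j, (Real.sqrt θ * u i * g j -
          Real.sqrt θ * (Real.sqrt n / euclNorm g) * u i * g j) ^ 2 =
          (Real.sqrt θ * (1 - Real.sqrt n / euclNorm g)) ^ 2 * (u i ^ 2 * g j ^ 2) :=
        fun i j => by ring
      simp_rw [e, ← Finset.mul_sum, ← Finset.sum_mul, ← euclNorm_sq]
      rw [hu, mul_pow, mul_pow, mul_pow, sq_abs]
      ring
    · calc _ ≤ 2 * (Real.sqrt θ * (|∑ j, (g j ^ 2 - 1)| / Real.sqrt n)) := by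
            gcongr
            exact abs_one_sub_div_mul_euclNorm_le g
        _ = _ := by ring
  · rw [integral_const_mul]
    calc _ ≤ 2 * Real.sqrt θ / Real.sqrt n * Real.sqrt (n * V) := by gcongr
      _ = 2 * Real.sqrt V * Real.sqrt θ * (Real.sqrt n / Real.sqrt n) := by
          rw [Real.sqrt_mul (Nat.cast_nonneg n)]
          ring
      _ ≤ 2 * Real.sqrt V * Real.sqrt θ * 1 := by
          gcongr
          exact div_self_le_one _
      _ ≤ _ := by nlinarith [Real.sqrt_nonneg θ]
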